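/- Let m and k be natural numbers, let G be a simple graph, let X, Y ⊆ V(G), let 𝒫 be a collection of 2^m·k pairwise disjoint X-Y-paths in G, and suppose the set of edges of the induced subgraph G[V(𝒫)] that do not lie on any path of 𝒫 can be partitioned into m induced matchings of G. Then G contains k pairwise non-adjacent X-Y-paths. -/

import Mathlib

open SimpleGraph

universe u

variable {V : Type u}

/-- A packaged walk in `G`: a pair of endpoints together with a walk between them. -/
abbrev PathPkg (G : SimpleGraph V) : Type u := Σ x : V, Σ y : V, G.Walk x y

/-- The set of vertices of a packaged walk. -/
def pkgSupport {G : SimpleGraph V} (p : PathPkg G) : Set V := {x | x ∈ p.2.2.support}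

/-- The set of edges of a packaged walk. -/
def pkgEdges {G : SimpleGraph V} (p : PathPkg G) : Set (Sym2 V) := {e | e ∈ p.2.2.edges}

/-- `p` is an `X`-`Y`-path: a path whose first endpoint lies in `X` and whose
second endpoint lies in `Y`. -/
def IsXYPath (G : SimpleGraph V) (X Y : Set V) (p : PathPkg G) : Prop :=
  p.2.2.IsPath ∧ p.1 ∈ X ∧ p.2.1 ∈ Y

/-- Two packaged walks are (vertex-)disjoint. -/
def PkgDisjoint {G : SimpleGraph V} (p q : PathPkg G) : Prop :=
  ∀ x, x ∈ pkgSupport p → x ∉ pkgSupport q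

/-- Two packaged walks are non-adjacent: they are vertex-disjoint and no edge of `G`
joins a vertex of one to a vertex of the other. -/
def PkgNonAdj (G : SimpleGraph V) (p q : PathPkg G) : Prop :=
  ∀ a, a ∈ pkgSupport p → ∀ b, b ∈ pkgSupport q → a ≠ b ∧ ¬ G.Adj a b

/-- `Z` separates `X` and `Y` in `G`: every `X`-`Y`-path meets `Z`. -/
def XYSeparates (G : SimpleGraph V) (X Y Z : Set V) : Prop :=
  ∀ p : PathPkg G, IsXYPath G X Y p → ∃ z, z ∈ Z ∧ z ∈ pkgSupport p

/-- `M` is an induced matching of `G`: a set of edges of `G` such that any two distinct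
edges of `M` are at distance at least `2` in `G` (no endpoint of one equals or is
adjacent to an endpoint of the other). -/
def IsInducedMatching (G : SimpleGraph V) (M : Set (Sym2 V)) : Prop :=
  M ⊆ G.edgeSet ∧
    ∀ e₁, e₁ ∈ M → ∀ e₂, e₂ ∈ M → e₁ ≠ e₂ →
      ∀ a, a ∈ e₁ → ∀ b, b ∈ e₂ → a ≠ b ∧ ¬ G.Adj a b

/-- `G` admits a partition of its edge set into `n` induced matchings
(a strong edge colouring with `n` colours). -/
def HasStrongEdgeColoring (G : SimpleGraph V) (n : ℕ) : Prop :=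
  ∃ M : Fin n → Set (Sym2 V),
    (∀ i, IsInducedMatching G (M i)) ∧
    (Pairwise fun i j => Disjoint (M i) (M j)) ∧
    (⋃ i, M i) = G.edgeSet

/-- The strong chromatic index of `G`: the least number of induced matchings into
which the edge set of `G` can be partitioned. -/
noncomputable def strongChromaticIndex (G : SimpleGraph V) : ℕ :=
  sInf {n | HasStrongEdgeColoring G n}

/-- `G` contains the complete graph `K_r` as a topological minor: there are `r` distinct
branch vertices joined pairwise by internally disjoint paths whose internal vertices
avoid all branch vertices. -/
def HasTopKMinor (G : SimpleGraph V) (r : ℕ) : Prop :=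
  ∃ (f : Fin r → V) (P : (i j : Fin r) → i < j → G.Walk (f i) (f j)),
    Function.Injective f ∧
    (∀ i j hij, (P i j hij).IsPath) ∧
    (∀ i j hij x, x ∈ (P i j hij).support → x ≠ f i → x ≠ f j → ∀ l, x ≠ f l) ∧
    (∀ i j hij i' j' hij', (i, j) ≠ (i', j') →
      ∀ x, x ∈ (P i j hij).support → x ∈ (P i' j' hij').support →
        (x = f i ∨ x = f j) ∧ (x = f i' ∨ x = f j'))

/-- `G` contains the complete graph `K_n` as a minor, witnessed by `n` nonempty,
pairwise disjoint, connected branch sets joined pairwise by edges. -/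
def HasKMinor (G : SimpleGraph V) (n : ℕ) : Prop :=
  ∃ B : Fin n → Set V,
    (∀ i, (B i).Nonempty) ∧
    (∀ i, (G.induce (B i)).Connected) ∧
    (Pairwise fun i j => Disjoint (B i) (B j)) ∧
    (∀ i j, i ≠ j → ∃ a ∈ B i, ∃ b ∈ B j, G.Adj a b)

/-!
One induced matching `M` is eliminated at a time, at the cost of half of the paths. Contract the
edges of `M` inside `V(𝒫)`. Close each path up to a cycle through an extra point and glue these
extra points in pairs; every point of the resulting set then lies on at most two cycles, counted
with multiplicity. So the transition matrix of the cycles, completed by loops, is twice a doubly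
stochastic matrix, and by Birkhoff's theorem some permutation `σ` moves along the transitions. The
excursions of `σ` from the glued points are disjoint paths of the contracted graph, half as many as
before, and each of them lifts to a connected subgraph formed by edges of `M` and `𝒫`.

No edge of `M` or `𝒫` joins the lifts of two different excursions. An edge of `M` has both ends in
one contracted vertex. At an unmatched vertex `σ` has no choice but to follow the path, and an edge
of a path between two matched vertices lies in `M`, because `M` is induced. Hence shortest paths
inside the lifts form a linkage whose remaining edges all belong to the other matchings.
-/

section DoublyStochastic

theorem exists_perm_forall_pos_of_mem_doublyStochastic {R n : Type*} [Field R] [LinearOrder R]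
    [IsStrictOrderedRing R] [Fintype n] [DecidableEq n] {M : Matrix n n R}
    (hM : M ∈ doublyStochastic R n) : ∃ σ : Equiv.Perm n, ∀ i, 0 < M i (σ i) := by
  obtain ⟨w, w_nonneg, w_sum, rfl⟩ := exists_eq_sum_perm_of_mem_doublyStochastic hM
  obtain ⟨σ, -, hσ⟩ : ∃ σ ∈ Finset.univ, 0 < w σ :=
    (Finset.sum_pos_iff_of_nonneg fun σ _ => w_nonneg σ).1 (w_sum ▸ one_pos)
  refine ⟨σ, fun i => ?_⟩
  rw [Matrix.sum_apply]
  refine Finset.sum_pos' (fun ρ _ => ?_) ⟨σ, Finset.mem_univ σ, ?_⟩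
  · rw [Matrix.smul_apply, Equiv.Perm.permMatrix, PEquiv.toMatrix_apply]
    split_ifs <;> simp [w_nonneg]
  · simpa [Equiv.Perm.permMatrix, PEquiv.toMatrix_apply] using hσ

open Finset in
theorem exists_perm_of_card_fiber_le {N W : Type*} [Fintype N] [Finite W] [DecidableEq W]
    (π : N → W) (τ : Equiv.Perm N) {d : ℕ} (hd : d ≠ 0) (hπ : ∀ w, #{a | π a = w} ≤ d) :
    ∃ σ : Equiv.Perm W, ∀ w,
      (∃ a, π a = w ∧ π (τ a) = σ w) ∨ (σ w = w ∧ #{a | π a = w} < d) := by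
  have := Fintype.ofFinite W
  let flow (w w' : W) : ℚ := #{a | π a = w ∧ π (τ a) = w'}
  -- Loops make up for the fibres with fewer than `d` elements.
  let slack (w : W) : ℚ := d - #{a | π a = w}
  let T : Matrix W W ℚ := (d : ℚ)⁻¹ • (Matrix.of flow + Matrix.diagonal slack)
  have T_apply (w w') : T w w' = (d : ℚ)⁻¹ * (flow w w' + if w = w' then slack w else 0) := by
    simp [T, Matrix.diagonal_apply, mul_add]
  have slack_nonneg (w) : 0 ≤ slack w := sub_nonneg.2 (mod_cast hπ w)
  have outflow (w) : ∑ w', flow w w' = #{a | π a = w} := by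
    simp only [flow, ← filter_filter, ← Nat.cast_sum]
    rw [← card_eq_sum_card_fiberwise (by simp)]
  have inflow (w') : ∑ w, flow w w' = #{a | π a = w'} := by
    have flow_eq (w) : flow w w' = #{a ∈ {a | π (τ a) = w'} | π a = w} := by
      simp only [flow, filter_filter, and_comm]
    simp only [flow_eq, ← Nat.cast_sum]
    rw [← card_eq_sum_card_fiberwise (by simp), card_equiv τ (t := {a | π a = w'}) (by simp)]
  have T_mem : T ∈ doublyStochastic ℚ W := by
    simp only [mem_doublyStochastic_iff_sum, T_apply, ← mul_sum, sum_add_distrib, sum_ite_eq,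
      sum_ite_eq', mem_univ, if_true, outflow, inflow, slack, add_sub_cancel]
    refine ⟨fun w w' => ?_, fun _ => ?_, fun _ => ?_⟩
    · have := slack_nonneg w
      positivity
    all_goals exact inv_mul_cancel₀ (mod_cast hd)
  obtain ⟨σ, hσ⟩ := exists_perm_forall_pos_of_mem_doublyStochastic T_mem
  refine ⟨σ, fun w => or_iff_not_imp_left.2 fun no_arc => ?_⟩
  have no_flow : flow w (σ w) = 0 := by
    simpa [flow, filter_eq_empty_iff] using no_arc
  have diag_pos := hσ w
  rw [T_apply, no_flow, zero_add] at diag_pos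
  split_ifs at diag_pos with fixed
  · exact ⟨fixed.symm, by simpa [slack, hd, Nat.pos_iff_ne_zero] using diag_pos⟩
  · simp at diag_pos

end DoublyStochastic

section Excursion

/-- The excursion of a permutation `σ` of `α ⊕ β` from `i : α`: the elements of `β` that the orbit
`σ i, σ² i, …` visits before its first return to `α`. -/
inductive Excursion {α β : Type*} (σ : Equiv.Perm (α ⊕ β)) (i : α) : β → Prop
  | start {b : β} (h : σ (Sum.inl i) = Sum.inr b) : Excursion σ i b
  | step {b b' : β} (hb : Excursion σ i b) (h : σ (Sum.inr b) = Sum.inr b') : Excursion σ i b'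

namespace Excursion

variable {α β : Type*} {σ : Equiv.Perm (α ⊕ β)} {i j : α} {b : β}

theorem start_unique (hi : Excursion σ i b) (hj : Excursion σ j b) : i = j := by
  induction hi with
  | start h =>
    cases hj with
    | start h' => exact Sum.inl_injective (σ.injective (h.trans h'.symm))
    | step _ h' => cases σ.injective (h.trans h'.symm)
  | step _ h ih =>
    cases hj with
    | start h' => cases σ.injective (h.trans h'.symm)
    | step hb' h' => cases σ.injective (h.trans h'.symm); exact ih hb'

theorem apply_ne_self (hb : Excursion σ i b) : σ (Sum.inr b) ≠ Sum.inr b := by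
  induction hb with
  | start h => exact fun h' => by cases σ.injective (h.trans h'.symm)
  | step _ h ih => exact fun h' => by cases σ.injective (h.trans h'.symm); exact ih h

theorem exists_apply_eq_inl [Finite β] (h : σ (Sum.inl i) = Sum.inr b) :
    ∃ b', Excursion σ i b' ∧ ∃ j, σ (Sum.inr b') = Sum.inl j := by
  by_contra! never_returns
  let T : Set (α ⊕ β) := Sum.inr '' {b' | Excursion σ i b'}
  have mapsTo : Set.MapsTo σ T T := by
    rintro _ ⟨b', hb', rfl⟩
    rcases h' : σ (Sum.inr b') with j | b''
    · exact absurd h' (never_returns b' hb' j)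
    · exact ⟨b'', Excursion.step hb' h', rfl⟩
  have bijOn : Set.BijOn σ T T :=
    (((Set.toFinite _).image _).injOn_iff_bijOn_of_mapsTo mapsTo).1 σ.injective.injOn
  obtain ⟨_, ⟨b', -, rfl⟩, h'⟩ := bijOn.surjOn ⟨b, .start h, rfl⟩
  cases σ.injective (h'.trans h.symm)

end Excursion

end Excursion

section Chordless

variable {H : SimpleGraph V} {x y : V}

theorem isChordless_of_length_eq_dist (p : H.Walk x y) (hp : p.length = H.dist x y) :
    p.IsChordless := by
  rw [Walk.isChordless_iff_forall_mem_edges]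
  have mem_edges_of_lt {i j : ℕ} (hj : j ≤ p.length) (hij : i < j)
      (hadj : H.Adj (p.getVert i) (p.getVert j)) : s(p.getVert i, p.getVert j) ∈ p.edges := by
    have shortcut := H.dist_le (((p.take i).concat hadj).append (p.drop j))
    rw [Walk.length_append, Walk.length_concat, Walk.take_length, Walk.drop_length] at shortcut
    obtain rfl : j = i + 1 := by omega
    exact p.mk_mem_edges_iff_exists.2 ⟨i, hj, rfl⟩
  intro u v hu hv hadj
  obtain ⟨i, rfl, hi⟩ := Walk.mem_support_iff_exists_getVert.1 hu
  obtain ⟨j, rfl, hj⟩ := Walk.mem_support_iff_exists_getVert.1 hv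
  rcases lt_trichotomy i j with hij | rfl | hji
  · exact mem_edges_of_lt hj hij hadj
  · exact absurd rfl hadj.ne
  · exact Sym2.eq_swap ▸ mem_edges_of_lt hi hji hadj.symm

theorem isChordless_map_embedding {V' : Type*} {H' : SimpleGraph V'} (f : H ↪g H')
    {p : H.Walk x y} (hp : p.IsChordless) : (p.map f.toHom).IsChordless := by
  rw [Walk.isChordless_iff_forall_mem_edges]
  simp only [Walk.support_map, Walk.edges_map, List.mem_map]
  rintro _ _ ⟨u, hu, rfl⟩ ⟨v, hv, rfl⟩ hadj
  exact ⟨s(u, v), hp.mem_edges hu hv (f.map_adj_iff.1 hadj), rfl⟩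

theorem exists_isPath_isChordless_of_reachable_induce {S : Set V} {x y : S}
    (h : (H.induce S).Reachable x y) :
    ∃ p : H.Walk x y, p.IsPath ∧ p.IsChordless ∧ ∀ v ∈ p.support, v ∈ S := by
  obtain ⟨q, hq⟩ := h.exists_walk_length_eq_dist
  refine ⟨q.map (Embedding.induce S).toHom,
    (q.isPath_of_length_eq_dist hq).map Subtype.val_injective,
    isChordless_map_embedding _ (isChordless_of_length_eq_dist q hq), fun v hv => ?_⟩
  obtain ⟨w, -, rfl⟩ := List.mem_map.1 (Walk.support_map _ q ▸ hv)
  exact w.2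

end Chordless

section Halving

variable {ι U C : Type*} {c : U → C} {τ : Equiv.Perm ((ι × Bool) ⊕ U)} {σ : Equiv.Perm (ι ⊕ C)}

/-- `σ` halves `τ` along `c : U → C`: after `(i, true)` and `(i, false)` are merged into `i`, and
`U` is mapped to `C` by `c`, every move of `σ` is the image of a move of `τ`, except that `σ` may
fix elements of `C`. -/
structure IsHalving (c : U → C) (τ : Equiv.Perm ((ι × Bool) ⊕ U)) (σ : Equiv.Perm (ι ⊕ C)) :
    Prop where
  apply_inl : ∀ i, ∃ t, σ (Sum.inl i) = Sum.map Prod.fst c (τ (Sum.inl (i, t)))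
  apply_inr : ∀ q, σ (Sum.inr q) ≠ Sum.inr q →
    ∃ u, c u = q ∧ σ (Sum.inr q) = Sum.map Prod.fst c (τ (Sum.inr u))

open Finset in
theorem exists_isHalving [Finite ι] [Fintype U] [Finite C] [DecidableEq C] (c : U → C)
    (hc : ∀ q, #{u | c u = q} ≤ 2) (τ : Equiv.Perm ((ι × Bool) ⊕ U)) :
    ∃ σ, IsHalving c τ σ := by
  classical
  have := Fintype.ofFinite ι
  let π : (ι × Bool) ⊕ U → ι ⊕ C := Sum.map Prod.fst c
  have card_fiber_inl (i : ι) : #{a | π a = Sum.inl i} = 2 := by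
    have : ({a | π a = Sum.inl i} : Finset _) = {Sum.inl (i, true), Sum.inl (i, false)} := by
      ext (⟨i', _ | _⟩ | u) <;> simp [π]
    simp [this]
  have card_fiber_inr (q : C) : #{a | π a = Sum.inr q} ≤ 2 := by
    have : ({a | π a = Sum.inr q} : Finset _) =
        ({u | c u = q} : Finset U).map Function.Embedding.inr := by
      ext (_ | u) <;> simp [π]
    simpa [this] using hc q
  obtain ⟨σ, hσ⟩ := exists_perm_of_card_fiber_le π τ two_ne_zero
    (Sum.rec (fun i => (card_fiber_inl i).le) card_fiber_inr)
  refine ⟨σ, fun i => ?_, fun q hq => ?_⟩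
  · obtain ⟨⟨i', t⟩ | u, hπ, h⟩ | ⟨-, h⟩ := hσ (Sum.inl i)
    · cases hπ
      exact ⟨t, h.symm⟩
    · cases hπ
    · exact absurd h (card_fiber_inl i).not_lt
  · obtain ⟨⟨i', t⟩ | u, hπ, h⟩ | ⟨h, -⟩ := hσ (Sum.inr q)
    · cases hπ
    · exact ⟨u, Sum.inr_injective hπ, h.symm⟩
    · exact absurd h hq

namespace IsHalving

variable {i : ι} {q q' : C} {u v : U}

theorem exists_lift_inr (h : IsHalving c τ σ) (hq : σ (Sum.inr q) = Sum.inr q') (hne : q ≠ q') :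
    ∃ u v, c u = q ∧ c v = q' ∧ τ (Sum.inr u) = Sum.inr v := by
  obtain ⟨u, rfl, hu⟩ := h.apply_inr q (by simpa [hq] using hne.symm)
  rw [hq] at hu
  rcases hτ : τ (Sum.inr u) with j | v <;> rw [hτ] at hu
  · cases hu
  · exact ⟨u, v, rfl, (Sum.inr_injective hu).symm, hτ⟩

theorem exists_lift_inl (h : IsHalving c τ σ) (hq : σ (Sum.inr q) = Sum.inl i) :
    ∃ u j, c u = q ∧ τ (Sum.inr u) = Sum.inl j := by
  obtain ⟨u, rfl, hu⟩ := h.apply_inr q (by simp [hq])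
  rw [hq] at hu
  rcases hτ : τ (Sum.inr u) with j | v <;> rw [hτ] at hu
  · exact ⟨u, j, rfl, hτ⟩
  · cases hu

theorem excursion_succ (h : IsHalving c τ σ) (huv : τ (Sum.inr u) = Sum.inr v)
    (u_alone : ∀ u', c u' = c u → u' = u) (hu : Excursion σ i (c u)) : Excursion σ i (c v) := by
  obtain ⟨u', hu', hσ⟩ := h.apply_inr (c u) hu.apply_ne_self
  rw [u_alone u' hu', huv] at hσ
  exact hu.step hσ

theorem excursion_pred (h : IsHalving c τ σ) (huv : τ (Sum.inr u) = Sum.inr v)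
    (v_alone : ∀ v', c v' = c v → v' = v) (hv : Excursion σ i (c v)) : Excursion σ i (c u) := by
  have eq_of_map_eq {a} (ha : Sum.map Prod.fst c (τ a) = Sum.inr (c v)) : a = Sum.inr u := by
    rcases hτ : τ a with j | v' <;> rw [hτ] at ha
    · cases ha
    · rw [v_alone v' (Sum.inr_injective ha), ← huv] at hτ
      exact τ.injective hτ
  generalize hq : c v = q at hv
  cases hv with
  | start hstart =>
    obtain ⟨t, ht⟩ := h.apply_inl i
    cases eq_of_map_eq (ht.symm.trans (hq ▸ hstart))
  | step hb hstep =>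
    obtain ⟨u', rfl, hu'⟩ := h.apply_inr _ hb.apply_ne_self
    cases eq_of_map_eq (hu'.symm.trans (hq ▸ hstep))
    exact hb

end IsHalving

end Halving

section PathFamily

variable {G : SimpleGraph V} {J : Type*} {P : J → PathPkg G}

/-- The vertex set `V(𝒫)` of a family of paths. -/
def familyVerts (P : J → PathPkg G) : Set V := ⋃ j, pkgSupport (P j)

/-- The edge set `E(𝒫)` of a family of paths. -/
def familyEdges (P : J → PathPkg G) : Set (Sym2 V) := ⋃ j, pkgEdges (P j)

/-- The edges of `G[V(𝒫)]` that lie on no path of `𝒫`. -/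
def offPathEdges (P : J → PathPkg G) : Set (Sym2 V) :=
  {e | e ∈ G.edgeSet ∧ ∀ v, v ∈ e → v ∈ familyVerts P} \ familyEdges P

/-- A linkage is a family of pairwise disjoint paths. Its end sets are not part of the notion. -/
structure IsLinkage (P : J → PathPkg G) : Prop where
  isPath : ∀ j, (P j).2.2.IsPath
  disjoint : Pairwise fun i j => PkgDisjoint (P i) (P j)

theorem finite_familyVerts [Finite J] (P : J → PathPkg G) : (familyVerts P).Finite :=
  Set.finite_iUnion fun j => List.finite_toSet (P j).2.2.support

theorem familyEdges_subset_edgeSet (P : J → PathPkg G) : familyEdges P ⊆ G.edgeSet :=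
  Set.iUnion_subset fun j _ he => (P j).2.2.edges_subset_edgeSet he

theorem IsLinkage.pkgNonAdj_of_offPathEdges_eq_empty (hP : IsLinkage P)
    (hoff : offPathEdges P = ∅) : Pairwise fun i j => PkgNonAdj G (P i) (P j) := by
  intro i j hij a ha b hb
  refine ⟨fun hab => hP.disjoint hij a ha (hab ▸ hb), fun hadj => ?_⟩
  have hverts : ∀ v, v ∈ s(a, b) → v ∈ familyVerts P := by
    rw [Sym2.forall_mem_pair]
    exact ⟨Set.mem_iUnion_of_mem i ha, Set.mem_iUnion_of_mem j hb⟩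
  obtain ⟨l, hl⟩ : ∃ l, s(a, b) ∈ pkgEdges (P l) := by
    by_contra hedge
    have : s(a, b) ∈ offPathEdges P := ⟨⟨hadj, hverts⟩, fun he => hedge (Set.mem_iUnion.1 he)⟩
    simp [hoff] at this
  obtain rfl : i = l := hP.disjoint.eq fun h => h a ha ((P l).2.2.fst_mem_support_of_mem_edges hl)
  exact hP.disjoint hij b ((P i).2.2.snd_mem_support_of_mem_edges hl) hb

/-- The `l`-th vertex of the `j`-th path of `P`; for `l` beyond the length of the path, its last
vertex. -/
def vertexAt (P : J → PathPkg G) (j : J) (l : ℕ) : familyVerts P :=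
  ⟨(P j).2.2.getVert l, Set.mem_iUnion_of_mem j ((P j).2.2.getVert_mem_support l)⟩

theorem exists_vertexAt_eq (u : familyVerts P) :
    ∃ j, ∃ l ≤ (P j).2.2.length, vertexAt P j l = u := by
  obtain ⟨v, hv⟩ := u
  obtain ⟨j, hj⟩ := Set.mem_iUnion.1 hv
  obtain ⟨l, hl, hle⟩ := Walk.mem_support_iff_exists_getVert.1 hj
  exact ⟨j, l, hle, Subtype.ext hl⟩

theorem IsLinkage.vertexAt_inj (hP : IsLinkage P) {j j' : J} {l l' : ℕ}
    (hl : l ≤ (P j).2.2.length) (hl' : l' ≤ (P j').2.2.length)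
    (h : vertexAt P j l = vertexAt P j' l') : j = j' ∧ l = l' := by
  have hvert : (P j).2.2.getVert l = (P j').2.2.getVert l' := congrArg Subtype.val h
  obtain rfl : j = j' := hP.disjoint.eq fun hdisj =>
    hdisj _ ((P j).2.2.getVert_mem_support l) (hvert ▸ (P j').2.2.getVert_mem_support l')
  exact ⟨rfl, (hP.isPath j).getVert_injOn hl hl' hvert⟩

/-- Each path `v₀, …, vₙ` of `P`, with index `j`, is read as the cycle `j, v₀, …, vₙ` of length
`n + 2` in `J ⊕ V(𝒫)`; this is the entry of that cycle at a given position. -/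
def cycleEntry (P : J → PathPkg G) (x : Σ j, Fin ((P j).2.2.length + 2)) : J ⊕ familyVerts P :=
  Fin.cases (Sum.inl x.1) (fun l => Sum.inr (vertexAt P x.1 l)) x.2

theorem IsLinkage.bijective_cycleEntry (hP : IsLinkage P) :
    Function.Bijective (cycleEntry P) := by
  constructor
  · rintro ⟨j, l⟩ ⟨j', l'⟩ h
    cases l using Fin.cases with
    | zero =>
      cases l' using Fin.cases with
      | zero => cases h; rfl
      | succ l' => cases h
    | succ l =>
      cases l' using Fin.cases with
      | zero => cases h
      | succ l' =>
        obtain ⟨rfl, hl⟩ := hP.vertexAt_inj l.is_le l'.is_le (Sum.inr_injective h)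
        rw [Fin.ext hl]
  · rintro (j | u)
    · exact ⟨⟨j, 0⟩, rfl⟩
    · obtain ⟨j, l, hl, rfl⟩ := exists_vertexAt_eq u
      exact ⟨⟨j, Fin.succ ⟨l, Nat.lt_succ_of_le hl⟩⟩, rfl⟩

/-- The permutation of `J ⊕ V(𝒫)` whose cycles are `j, v₀, …, vₙ` for the paths `v₀, …, vₙ` of a
linkage `𝒫`. -/
noncomputable def IsLinkage.succPerm (hP : IsLinkage P) : Equiv.Perm (J ⊕ familyVerts P) :=
  (Equiv.ofBijective _ hP.bijective_cycleEntry).permCongr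
    (Equiv.sigmaCongrRight fun _ => finRotate _)

namespace IsLinkage

theorem succPerm_cycleEntry (hP : IsLinkage P) (j : J) (l : Fin ((P j).2.2.length + 2)) :
    hP.succPerm (cycleEntry P ⟨j, l⟩) = cycleEntry P ⟨j, finRotate _ l⟩ := by
  rw [succPerm, Equiv.permCongr_apply,
    ← Equiv.ofBijective_apply (cycleEntry P) (hf := hP.bijective_cycleEntry),
    Equiv.symm_apply_apply]
  rfl

theorem succPerm_inl (hP : IsLinkage P) (j : J) :
    hP.succPerm (Sum.inl j) = Sum.inr (vertexAt P j 0) := by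
  have := hP.succPerm_cycleEntry j 0
  rwa [finRotate_apply, zero_add] at this

theorem succPerm_vertexAt_of_lt (hP : IsLinkage P) {j : J} {l : ℕ} (hl : l < (P j).2.2.length) :
    hP.succPerm (Sum.inr (vertexAt P j l)) = Sum.inr (vertexAt P j (l + 1)) := by
  have := hP.succPerm_cycleEntry j ⟨l + 1, by omega⟩
  rwa [finRotate_of_lt (by omega)] at this

theorem succPerm_vertexAt_length (hP : IsLinkage P) (j : J) :
    hP.succPerm (Sum.inr (vertexAt P j (P j).2.2.length)) = Sum.inl j := by
  have := hP.succPerm_cycleEntry j (Fin.last _)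
  rwa [finRotate_last] at this

theorem eq_last_of_succPerm_eq_inl (hP : IsLinkage P) {u : familyVerts P} {j : J}
    (h : hP.succPerm (Sum.inr u) = Sum.inl j) : (u : V) = (P j).2.1 := by
  rw [← hP.succPerm_vertexAt_length j] at h
  rw [Sum.inr_injective (hP.succPerm.injective h)]
  exact (P j).2.2.getVert_length

theorem mem_familyEdges_iff (hP : IsLinkage P) {u v : familyVerts P} :
    s(↑u, ↑v) ∈ familyEdges P ↔
      hP.succPerm (Sum.inr u) = Sum.inr v ∨ hP.succPerm (Sum.inr v) = Sum.inr u := by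
  have edge_of_succ {u v : familyVerts P} (h : hP.succPerm (Sum.inr u) = Sum.inr v) :
      s(↑u, ↑v) ∈ familyEdges P := by
    obtain ⟨j, l, hl, rfl⟩ := exists_vertexAt_eq u
    obtain hl | rfl := hl.lt_or_eq
    · rw [hP.succPerm_vertexAt_of_lt hl] at h
      rw [← Sum.inr_injective h]
      exact Set.mem_iUnion_of_mem j ((P j).2.2.mk_mem_edges_iff_exists.2 ⟨l, hl, rfl⟩)
    · rw [succPerm_vertexAt_length] at h
      cases h
  refine ⟨fun h => ?_, fun h => h.elim edge_of_succ fun h => Sym2.eq_swap ▸ edge_of_succ h⟩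
  obtain ⟨j, hj⟩ := Set.mem_iUnion.1 h
  obtain ⟨l, hl, h⟩ := (P j).2.2.mk_mem_edges_iff_exists.1 hj
  have succ := hP.succPerm_vertexAt_of_lt hl
  rcases Sym2.eq_iff.1 h with ⟨hu, hv⟩ | ⟨hv, hu⟩
  · obtain rfl : vertexAt P j l = u := Subtype.ext hu
    obtain rfl : vertexAt P j (l + 1) = v := Subtype.ext hv
    exact Or.inl succ
  · obtain rfl : vertexAt P j l = v := Subtype.ext hv
    obtain rfl : vertexAt P j (l + 1) = u := Subtype.ext hu
    exact Or.inr succ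

end IsLinkage

end PathFamily

namespace IsInducedMatching

variable {G : SimpleGraph V} {M : Set (Sym2 V)} {x x' y y' z : V}

theorem eq_of_mem (hM : IsInducedMatching G M) (hy : s(x, y) ∈ M) (hz : s(x, z) ∈ M) : y = z := by
  by_contra hne
  exact (hM.2 _ hy _ hz (mt Sym2.congr_right.1 hne)
    x (Sym2.mem_mk_left x y) x (Sym2.mem_mk_left x z)).1 rfl

theorem mem_of_adj (hM : IsInducedMatching G M) (hx : s(x, x') ∈ M) (hy : s(y, y') ∈ M)
    (hadj : G.Adj x y) : s(x, y) ∈ M := by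
  have same_edge : s(x, x') = s(y, y') := by
    by_contra hne
    exact (hM.2 _ hx _ hy hne x (Sym2.mem_mk_left x x') y (Sym2.mem_mk_left y y')).2 hadj
  rcases Sym2.eq_iff.1 same_edge with ⟨rfl, -⟩ | ⟨-, rfl⟩
  · exact absurd rfl hadj.ne
  · exact hx

end IsInducedMatching

section MatchingClass

variable {G : SimpleGraph V} {M : Set (Sym2 V)} {S : Set V}

/-- The class of `u ∈ S` when the edges of a matching `M` inside `S` are contracted: `u` together
with its partner, if it has one in `S`. -/
def matchingClass (M : Set (Sym2 V)) (u : S) : Set S := {v | u = v ∨ s(↑u, ↑v) ∈ M}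

theorem IsInducedMatching.matchingClass_eq_iff (hM : IsInducedMatching G M) {u v : S} :
    matchingClass M u = matchingClass M v ↔ u = v ∨ s(↑u, ↑v) ∈ M := by
  have subset_of_mem {u v : S} (huv : s(↑u, ↑v) ∈ M) : matchingClass M u ⊆ matchingClass M v := by
    rintro w (rfl | hw)
    · exact Or.inr (Sym2.eq_swap ▸ huv)
    · exact Or.inl (Subtype.ext (hM.eq_of_mem huv hw))
  constructor
  · intro h
    have hv : v ∈ matchingClass M v := Or.inl rfl
    rwa [← h] at hv
  · rintro (rfl | huv)
    · rfl
    · exact (subset_of_mem huv).antisymm (subset_of_mem (Sym2.eq_swap ▸ huv))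

open Finset Classical in
theorem IsInducedMatching.card_matchingClass_fiber_le_two [Fintype S] (hM : IsInducedMatching G M)
    (q : Set S) : #{u | matchingClass M u = q} ≤ 2 := by
  by_contra! h
  obtain ⟨u, v, w, hu, hv, hw, huv, huw, hvw⟩ := two_lt_card_iff.1 h
  simp only [mem_filter_univ] at hu hv hw
  have huv' := (hM.matchingClass_eq_iff.1 (hu.trans hv.symm)).resolve_left huv
  have huw' := (hM.matchingClass_eq_iff.1 (hu.trans hw.symm)).resolve_left huw
  exact hvw (Subtype.ext (hM.eq_of_mem huv' huw'))

end MatchingClass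

section Rerouting

variable {G : SimpleGraph V} {ι : Type*} {M : Set (Sym2 V)}

/-- The graph formed by the edges of a matching `M` and of the paths of `𝒫`. -/
def pathMatchingGraph (M : Set (Sym2 V)) (P : ι → PathPkg G) : SimpleGraph V :=
  fromEdgeSet (M ∪ familyEdges P)

theorem pathMatchingGraph_adj (hM : M ⊆ G.edgeSet) {P : ι → PathPkg G} {x y : V} :
    (pathMatchingGraph M P).Adj x y ↔ s(x, y) ∈ M ∪ familyEdges P := by
  rw [pathMatchingGraph, fromEdgeSet_adj, and_iff_left_iff_imp]
  exact fun h => G.ne_of_adj (Set.union_subset hM (familyEdges_subset_edgeSet P) h)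

theorem pathMatchingGraph_le (hM : M ⊆ G.edgeSet) (P : ι → PathPkg G) :
    pathMatchingGraph M P ≤ G := fun _ _ h =>
  Set.union_subset hM (familyEdges_subset_edgeSet P) ((pathMatchingGraph_adj hM).1 h)

variable {P : ι × Bool → PathPkg G} {σ : Equiv.Perm (ι ⊕ Set (familyVerts P))} {i j : ι}

/-- The vertices of `G` whose contraction along `M` lies on the excursion of `σ` from `i`. -/
def excursionVerts (M : Set (Sym2 V)) (σ : Equiv.Perm (ι ⊕ Set (familyVerts P))) (i : ι) : Set V :=
  Subtype.val '' {u : familyVerts P | Excursion σ i (matchingClass M u)}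

theorem mem_excursionVerts {u : familyVerts P} :
    ↑u ∈ excursionVerts M σ i ↔ Excursion σ i (matchingClass M u) :=
  Subtype.val_injective.mem_set_image

theorem excursionVerts_subset : excursionVerts M σ i ⊆ familyVerts P := by
  rintro _ ⟨u, -, rfl⟩
  exact u.2

theorem disjoint_excursionVerts (hij : i ≠ j) :
    Disjoint (excursionVerts M σ i) (excursionVerts M σ j) := by
  rw [excursionVerts, excursionVerts, Set.disjoint_image_iff Subtype.val_injective]
  exact Set.disjoint_left.2 fun u hi hj => hij (hi.start_unique hj)

theorem eq_of_mem_excursionVerts_of_mem {hP : IsLinkage P} (hM : IsInducedMatching G M)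
    (hσ : IsHalving (matchingClass M) hP.succPerm σ) {x y : V} (hx : x ∈ excursionVerts M σ i)
    (hy : y ∈ excursionVerts M σ j) (hxy : s(x, y) ∈ M ∪ familyEdges P) : i = j := by
  have alone_or_matched (u : familyVerts P) :
      (∀ v, matchingClass M v = matchingClass M u → v = u) ∨ ∃ x, s(↑u, x) ∈ M := by
    by_contra! h
    obtain ⟨⟨v, hv, hne⟩, unmatched⟩ := h
    exact unmatched v ((hM.matchingClass_eq_iff.1 hv.symm).resolve_left hne.symm)
  have of_mem_matching {i j : ι} {u v : familyVerts P} (hu : Excursion σ i (matchingClass M u))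
      (hv : Excursion σ j (matchingClass M v)) (huv : s(↑u, ↑v) ∈ M) : i = j :=
    hu.start_unique (hM.matchingClass_eq_iff.2 (Or.inr huv) ▸ hv)
  have of_succ {i j : ι} {u v : familyVerts P} (hu : Excursion σ i (matchingClass M u))
      (hv : Excursion σ j (matchingClass M v)) (huv : hP.succPerm (Sum.inr u) = Sum.inr v) :
      i = j := by
    obtain u_alone | ⟨u', hu'⟩ := alone_or_matched u
    · exact (hσ.excursion_succ huv u_alone hu).start_unique hv
    obtain v_alone | ⟨v', hv'⟩ := alone_or_matched v
    · exact hu.start_unique (hσ.excursion_pred huv v_alone hv)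
    have hadj : G.Adj u v :=
      familyEdges_subset_edgeSet P (hP.mem_familyEdges_iff.2 (Or.inl huv))
    exact of_mem_matching hu hv (hM.mem_of_adj hu' hv' hadj)
  obtain ⟨u, hu, rfl⟩ := hx
  obtain ⟨v, hv, rfl⟩ := hy
  obtain hxy | hxy := hxy
  · exact of_mem_matching hu hv hxy
  · exact (hP.mem_familyEdges_iff.1 hxy).elim (of_succ hu hv) fun h => (of_succ hv hu h).symm

theorem exists_apply_inl_eq_matchingClass_vertexAt_zero {hP : IsLinkage P}
    (hσ : IsHalving (matchingClass M) hP.succPerm σ) (i : ι) :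
    ∃ t, σ (Sum.inl i) = Sum.inr (matchingClass M (vertexAt P (i, t) 0)) := by
  obtain ⟨t, ht⟩ := hσ.apply_inl i
  exact ⟨t, by rwa [hP.succPerm_inl] at ht⟩

theorem exists_fst_mem_excursionVerts {hP : IsLinkage P}
    (hσ : IsHalving (matchingClass M) hP.succPerm σ) (i : ι) :
    ∃ j, (P j).1 ∈ excursionVerts M σ i := by
  obtain ⟨t, ht⟩ := exists_apply_inl_eq_matchingClass_vertexAt_zero hσ i
  have first_eq : (vertexAt P (i, t) 0 : V) = (P (i, t)).1 := (P (i, t)).2.2.getVert_zero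
  exact ⟨(i, t), first_eq ▸ mem_excursionVerts.2 (.start ht)⟩

theorem exists_snd_mem_excursionVerts [Finite ι] {hP : IsLinkage P}
    (hσ : IsHalving (matchingClass M) hP.succPerm σ) (i : ι) :
    ∃ j, (P j).2.1 ∈ excursionVerts M σ i := by
  have := (finite_familyVerts P).to_subtype
  obtain ⟨t, ht⟩ := exists_apply_inl_eq_matchingClass_vertexAt_zero hσ i
  obtain ⟨q, hq, l, hl⟩ := Excursion.exists_apply_eq_inl ht
  obtain ⟨u, j, rfl, hu⟩ := hσ.exists_lift_inl hl
  exact ⟨j, hP.eq_last_of_succPerm_eq_inl hu ▸ mem_excursionVerts.2 hq⟩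

theorem reachable_of_matchingClass_eq (hM : IsInducedMatching G M)
    {u v : familyVerts P} (huv : matchingClass M u = matchingClass M v)
    (hu : ↑u ∈ excursionVerts M σ i) (hv : ↑v ∈ excursionVerts M σ i) :
    ((pathMatchingGraph M P).induce (excursionVerts M σ i)).Reachable ⟨u, hu⟩ ⟨v, hv⟩ := by
  obtain rfl | hmem := hM.matchingClass_eq_iff.1 huv
  · rfl
  · exact Adj.reachable ((pathMatchingGraph_adj hM.1).2 (Or.inl hmem))

theorem preconnected_induce_excursionVerts {hP : IsLinkage P} (hM : IsInducedMatching G M)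
    (hσ : IsHalving (matchingClass M) hP.succPerm σ) (i : ι) :
    ((pathMatchingGraph M P).induce (excursionVerts M σ i)).Preconnected := by
  obtain ⟨t, ht⟩ := exists_apply_inl_eq_matchingClass_vertexAt_zero hσ i
  have hfirst := mem_excursionVerts.2 (Excursion.start ht)
  suffices reachable : ∀ q, Excursion σ i q → ∀ v : familyVerts P, matchingClass M v = q →
      ∀ hv : ↑v ∈ excursionVerts M σ i,
        ((pathMatchingGraph M P).induce (excursionVerts M σ i)).Reachable ⟨_, hfirst⟩ ⟨v, hv⟩ by
    rintro ⟨_, u, hu, rfl⟩ ⟨_, v, hv, rfl⟩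
    exact (reachable _ hu u rfl _).symm.trans (reachable _ hv v rfl _)
  intro q hq
  induction hq with
  | start hstart =>
    rintro v rfl hv
    exact reachable_of_matchingClass_eq hM (Sum.inr_injective (ht.symm.trans hstart)) _ hv
  | step hb hstep ih =>
    rintro v rfl hv
    obtain ⟨u, w, rfl, hw, huw⟩ := hσ.exists_lift_inr hstep fun h => hb.apply_ne_self (h ▸ hstep)
    have hu := mem_excursionVerts.2 hb
    have hw' := mem_excursionVerts.2 (hw ▸ hb.step hstep)
    have hadj : ((pathMatchingGraph M P).induce (excursionVerts M σ i)).Adj ⟨u, hu⟩ ⟨w, hw'⟩ :=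
      (pathMatchingGraph_adj hM.1).2 (Or.inr (hP.mem_familyEdges_iff.2 (Or.inl huw)))
    exact ((ih u rfl hu).trans hadj.reachable).trans
      (reachable_of_matchingClass_eq hM hw hw' hv)

theorem exists_isPath_isChordless_of_isHalving [Finite ι] {hP : IsLinkage P}
    (hM : IsInducedMatching G M) (hσ : IsHalving (matchingClass M) hP.succPerm σ) (i : ι) :
    ∃ j j', ∃ p : (pathMatchingGraph M P).Walk (P j).1 (P j').2.1,
      p.IsPath ∧ p.IsChordless ∧ ∀ v ∈ p.support, v ∈ excursionVerts M σ i := by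
  obtain ⟨j, hj⟩ := exists_fst_mem_excursionVerts hσ i
  obtain ⟨j', hj'⟩ := exists_snd_mem_excursionVerts hσ i
  exact ⟨j, j', exists_isPath_isChordless_of_reachable_induce
    (preconnected_induce_excursionVerts hM hσ i ⟨_, hj⟩ ⟨_, hj'⟩)⟩

theorem IsLinkage.exists_halving [Finite ι] (hP : IsLinkage P) (hM : IsInducedMatching G M) :
    ∃ Q : ι → PathPkg G, IsLinkage Q ∧ (∀ i, ∃ j, (Q i).1 = (P j).1) ∧
      (∀ i, ∃ j, (Q i).2.1 = (P j).2.1) ∧ offPathEdges Q ⊆ offPathEdges P \ M := by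
  classical
  have := (finite_familyVerts P).to_subtype
  have := Fintype.ofFinite (familyVerts P)
  obtain ⟨σ, hσ⟩ :=
    exists_isHalving (matchingClass M) hM.card_matchingClass_fiber_le_two hP.succPerm
  choose a b p p_isPath p_chordless p_support using exists_isPath_isChordless_of_isHalving hM hσ
  let Q (i : ι) : PathPkg G := ⟨_, _, (p i).mapLe (pathMatchingGraph_le hM.1 P)⟩
  have mem_pkgSupport {i : ι} {v : V} : v ∈ pkgSupport (Q i) ↔ v ∈ (p i).support := by
    simp [pkgSupport, Q]
  have mem_pkgEdges {i : ι} {e : Sym2 V} : e ∈ pkgEdges (Q i) ↔ e ∈ (p i).edges := by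
    simp [pkgEdges, Q]
  have mem_excursionVerts_of_mem {i : ι} {v : V} (hv : v ∈ pkgSupport (Q i)) :
      v ∈ excursionVerts M σ i :=
    p_support i v (mem_pkgSupport.1 hv)
  refine ⟨Q, ⟨fun i => (p_isPath i).mapLe _, fun i j hij v hi hj => ?_⟩, fun i => ⟨a i, rfl⟩,
    fun i => ⟨b i, rfl⟩, ?_⟩
  · exact Set.disjoint_left.1 (disjoint_excursionVerts hij) (mem_excursionVerts_of_mem hi)
      (mem_excursionVerts_of_mem hj)
  · rintro e ⟨⟨he, e_verts⟩, e_off⟩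
    induction e with | h x y =>
    obtain ⟨hx, hy⟩ := Sym2.forall_mem_pair.1 e_verts
    obtain ⟨i, hxi⟩ := Set.mem_iUnion.1 hx
    obtain ⟨j, hyj⟩ := Set.mem_iUnion.1 hy
    have hx' := mem_excursionVerts_of_mem hxi
    have hy' := mem_excursionVerts_of_mem hyj
    have not_mem : s(x, y) ∉ M ∪ familyEdges P := by
      intro hmem
      obtain rfl := eq_of_mem_excursionVerts_of_mem hM hσ hx' hy' hmem
      exact e_off (Set.mem_iUnion_of_mem i (mem_pkgEdges.2 ((p_chordless i).mem_edges
        (mem_pkgSupport.1 hxi) (mem_pkgSupport.1 hyj) ((pathMatchingGraph_adj hM.1).2 hmem))))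
    rw [Set.mem_union, not_or] at not_mem
    exact ⟨⟨⟨he, Sym2.forall_mem_pair.2 ⟨excursionVerts_subset hx', excursionVerts_subset hy'⟩⟩,
      not_mem.2⟩, not_mem.1⟩

end Rerouting

section Reindexing

variable {G : SimpleGraph V} {I J : Type*} {P : J → PathPkg G}

theorem IsLinkage.comp_equiv (hP : IsLinkage P) (e : I ≃ J) : IsLinkage (P ∘ e) :=
  ⟨fun i => hP.isPath (e i), hP.disjoint.comp_of_injective e.injective⟩

theorem offPathEdges_comp_equiv (P : J → PathPkg G) (e : I ≃ J) :
    offPathEdges (P ∘ e) = offPathEdges P := by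
  have verts : familyVerts (P ∘ e) = familyVerts P :=
    e.surjective.iUnion_comp fun j => pkgSupport (P j)
  have edges : familyEdges (P ∘ e) = familyEdges P :=
    e.surjective.iUnion_comp fun j => pkgEdges (P j)
  rw [offPathEdges, offPathEdges, verts, edges]

end Reindexing

theorem statement_2_general (m k : ℕ) (G : SimpleGraph V) (X Y : Set V)
    (P : Fin (2 ^ m * k) → PathPkg G)
    (hP : ∀ i, IsXYPath G X Y (P i))
    (hdisj : Pairwise fun i j => PkgDisjoint (P i) (P j))
    (M : Fin m → Set (Sym2 V))
    (hM : ∀ c, IsInducedMatching G (M c))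
    (hMcover : offPathEdges P ⊆ ⋃ c, M c) :
    ∃ Q : Fin k → PathPkg G,
      (∀ i, IsXYPath G X Y (Q i)) ∧
      Pairwise fun i j => PkgNonAdj G (Q i) (Q j) := by
  have linkage : IsLinkage P := ⟨fun i => (hP i).1, hdisj⟩
  induction m with
  | zero =>
    let e : Fin k ≃ Fin (2 ^ 0 * k) := finCongr (by simp)
    refine ⟨P ∘ e, fun i => hP (e i), (linkage.comp_equiv e).pkgNonAdj_of_offPathEdges_eq_empty ?_⟩
    rw [offPathEdges_comp_equiv]
    simpa using hMcover
  | succ m ih =>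
    let e : Fin (2 ^ m * k) × Bool ≃ Fin (2 ^ (m + 1) * k) :=
      Fintype.equivOfCardEq <| by
        rw [Fintype.card_prod, Fintype.card_bool, Fintype.card_fin, Fintype.card_fin]; ring
    obtain ⟨Q, hQ, Q_fst, Q_snd, Q_off⟩ :=
      (linkage.comp_equiv e).exists_halving (hM (Fin.last m))
    rw [offPathEdges_comp_equiv] at Q_off
    refine ih Q (fun i => ⟨hQ.isPath i, ?_, ?_⟩) hQ.disjoint (fun c => M c.castSucc)
      (fun c => hM c.castSucc) (fun x hx => ?_) hQ
    · obtain ⟨j, hj⟩ := Q_fst i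
      exact hj ▸ (hP (e j)).2.1
    · obtain ⟨j, hj⟩ := Q_snd i
      exact hj ▸ (hP (e j)).2.2
    · obtain ⟨hxP, hxM⟩ := Q_off hx
      obtain ⟨c, hc⟩ := Set.mem_iUnion.1 (hMcover hxP)
      cases c using Fin.lastCases with
      | last => exact absurd hc hxM
      | cast c => exact Set.mem_iUnion_of_mem c hc

theorem statement_2 (m k : ℕ) (G : SimpleGraph V) (X Y : Set V)
    (P : Fin (2 ^ m * k) → PathPkg G)
    (hP : ∀ i, IsXYPath G X Y (P i))
    (hdisj : Pairwise fun i j => PkgDisjoint (P i) (P j))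
    (M : Fin m → Set (Sym2 V))
    (hM : ∀ c, IsInducedMatching G (M c))
    (hMdisj : Pairwise fun c c' => Disjoint (M c) (M c'))
    (hMcover : (⋃ c, M c) =
      {e | e ∈ G.edgeSet ∧ ∀ v, v ∈ e → v ∈ ⋃ i, pkgSupport (P i)} \
        (⋃ i, pkgEdges (P i))) :
    ∃ Q : Fin k → PathPkg G,
      (∀ i, IsXYPath G X Y (Q i)) ∧
      Pairwise fun i j => PkgNonAdj G (Q i) (Q j) :=
  statement_2_general m k G X Y P hP hdisj M hM hMcover.ge
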